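/- arXiv:2109.00117 — 2 statements merged into one kernel-verified Lean document; each statement's English description precedes it below -/
import Mathlib

section
/- For every integer n ≥ 20, there exists a complete Bergman game starting from ₀(n) whose length is at least n² − 6n − 3n·log_φ n + 5·log_φ n + 2(log_φ n)² − 1 (as a real-number bound). Hence the maximal game length from ₀(n) has leading term n². -/
noncomputable section

/-- The golden ratio. -/
def phi : ℝ := (1 + Real.sqrt 5) / 2

/-- Base-φ logarithm. -/
def logphi (x : ℝ) : ℝ := Real.logb phi x

/-- A Bergman state: a finitely supported function from ℤ to ℕ. -/
abbrev BState := ℤ →₀ ℕ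

/-- A split move at index `i`. -/
def SplitAt (S S' : BState) (i : ℤ) : Prop :=
  2 ≤ S i ∧
    S' = S - Finsupp.single i 2 + Finsupp.single (i + 1) 1 + Finsupp.single (i - 2) 1

/-- A combine move at index `i`. -/
def CombineAt (S S' : BState) (i : ℤ) : Prop :=
  1 ≤ S i ∧ 1 ≤ S (i + 1) ∧
    S' = S - Finsupp.single i 1 - Finsupp.single (i + 1) 1 + Finsupp.single (i + 2) 1

/-- A move is a split or a combine. -/
def Move (S S' : BState) : Prop := (∃ i, SplitAt S S' i) ∨ (∃ i, CombineAt S S' i)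

/-- Terminal state: no move is legal. -/
def Terminal (S : BState) : Prop :=
  (∀ i, S i ≤ 1) ∧ ∀ i, ¬(1 ≤ S i ∧ 1 ≤ S (i + 1))

/-- A Bergman game of length `m` from `S`. -/
def Game (S : BState) (m : ℕ) (g : ℕ → BState) : Prop :=
  g 0 = S ∧ ∀ j < m, Move (g j) (g (j + 1))

/-- A complete Bergman game of length `m` from `S`. -/
def CompleteGame (S : BState) (m : ℕ) (g : ℕ → BState) : Prop :=
  Game S m g ∧ Terminal (g m)

/-- Reachability by a finite sequence of moves. -/
def Reachable : BState → BState → Prop := Relation.ReflTransGen Move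

/-- Reachability by split moves only. -/
def SplitReachable : BState → BState → Prop :=
  Relation.ReflTransGen fun S S' => ∃ i, SplitAt S S' i

/-- The initial state `₀(n)`: `n` chips at index 0. -/
def initState (n : ℕ) : BState := Finsupp.single 0 n

/-- Total number of chips in a state. -/
def chips (S : BState) : ℕ := S.sum fun _ c => c

open Classical in
/-- The number of split moves among the first `m` steps of `g`. -/
def splitCount (g : ℕ → BState) (m : ℕ) : ℕ :=
  ((Finset.range m).filter fun j => ∃ i, SplitAt (g j) (g (j + 1)) i).card

open Classical in
/-- The number of combine moves among the first `m` steps of `g`. -/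
def combineCount (g : ℕ → BState) (m : ℕ) : ℕ :=
  ((Finset.range m).filter fun j => ∃ i, CombineAt (g j) (g (j + 1)) i).card


/-!
Splitting while some index carries two chips conserves the number of chips and, since `φ` and `ψ`
are the roots of `x² = x + 1`, both `∑ φ ^ i` and `∑ ψ ^ i` over the chips, and it lowers the sum
of the chip indices by exactly one per move. Occupied windows of three consecutive indices stay
occupied, so the chips cannot drift off to `-∞` and the splitting stops; combining the rightmost
adjacent pair then ends the game.

When splitting from `₀(n)` stops, the chips occupy a set `G` of `n` distinct indices with
`∑ φ ^ i = ∑ ψ ^ i = n`, and the number of moves is `-∑ i` over `G`. The first sum forces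
`i ≤ log_φ n` on `G`. In the second, the powers whose parity is opposite to that of `min G` can
cancel at most `ψ ^ min G`, so every other index of the parity of `min G` is at least `-log_φ n`.
Hence all but `O(log n)` of the indices are negative, distinct and of one parity, and `-∑ i` is at
least about `1 + 3 + 5 + ⋯ ≈ n²`. When `n ≤ 2 log_φ n + 5` the claimed bound is not even positive.
-/

open Finset
open scoped goldenRatio

section Games

variable {S S' T U : BState} {i : ℤ} {m : ℕ} {g : ℕ → BState}

lemma Game.exists_snoc (hg : Game S m g) (hU : Move (g m) U) :
    ∃ g', Game S (m + 1) g' ∧ g' (m + 1) = U := by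
  refine ⟨Function.update g (m + 1) U, ⟨?_, fun j hj => ?_⟩, Function.update_self ..⟩
  · rw [Function.update_of_ne (by omega), hg.1]
  · rw [Function.update_of_ne (by omega : j ≠ m + 1)]
    obtain hjm | rfl := Nat.lt_succ_iff_lt_or_eq.mp hj
    · rw [Function.update_of_ne (by omega)]
      exact hg.2 j hjm
    · rwa [Function.update_self]

lemma Game.exists_append (hg : Game S m g) (hT : Reachable (g m) T) :
    ∃ k g', Game S (m + k) g' ∧ g' (m + k) = T := by
  induction hT with
  | refl => exact ⟨0, g, hg, rfl⟩
  | tail _ hmove ih =>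
    obtain ⟨k, g', hg', rfl⟩ := ih
    exact ⟨k + 1, hg'.exists_snoc hmove⟩

lemma SplitAt.weight_add {M : Type*} [AddCommMonoid M] (f : ℤ → M) (h : SplitAt S S' i) :
    Finsupp.weight f S' + 2 • f i = Finsupp.weight f S + (f (i + 1) + f (i - 2)) := by
  obtain ⟨htwo, rfl⟩ := h
  have hsub : S - Finsupp.single i 2 + Finsupp.single i 2 = S :=
    tsub_add_cancel_of_le (Finsupp.single_le_iff.mpr htwo)
  nth_rw 2 [← hsub]
  simp only [map_add, Finsupp.weight_single, one_smul]
  abel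

lemma CombineAt.degree_add_one (h : CombineAt S S' i) : S'.degree + 1 = S.degree := by
  obtain ⟨hi, hi', rfl⟩ := h
  have hsub : S - Finsupp.single i 1 + Finsupp.single i 1 = S :=
    tsub_add_cancel_of_le (Finsupp.single_le_iff.mpr hi)
  have hsub' : S - Finsupp.single i 1 - Finsupp.single (i + 1) 1 + Finsupp.single (i + 1) 1
      = S - Finsupp.single i 1 :=
    tsub_add_cancel_of_le (Finsupp.single_le_iff.mpr (by simpa using hi'))
  conv_rhs => rw [← hsub, ← hsub']
  simp only [map_add, Finsupp.degree_single]

lemma SplitReachable.weight_eq {M : Type*} [AddCancelCommMonoid M] {f : ℤ → M}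
    (hf : ∀ i, f (i + 1) + f (i - 2) = 2 • f i) (h : SplitReachable S T) :
    Finsupp.weight f T = Finsupp.weight f S := by
  induction h with
  | refl => rfl
  | tail _ hsplit ih =>
    obtain ⟨i, hsplit⟩ := hsplit
    rw [← ih]
    exact add_right_cancel (hf i ▸ hsplit.weight_add f)

lemma SplitReachable.degree_eq (h : SplitReachable S T) : T.degree = S.degree := by
  simp only [Finsupp.degree_eq_weight_one]
  exact h.weight_eq fun _ => rfl

lemma SplitAt.degree_eq (h : SplitAt S S' i) : S'.degree = S.degree :=
  SplitReachable.degree_eq (.single ⟨i, h⟩)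

lemma SplitAt.weight_id_add_one (h : SplitAt S S' i) :
    Finsupp.weight (id : ℤ → ℤ) S' + 1 = Finsupp.weight id S := by
  have hweight := h.weight_add (id : ℤ → ℤ)
  simp only [id, two_nsmul] at hweight ⊢
  omega

lemma SplitReachable.exists_game (h : SplitReachable S T) :
    ∃ (m : ℕ) (g : ℕ → BState), Game S m g ∧ g m = T ∧
      Finsupp.weight (id : ℤ → ℤ) T + m = Finsupp.weight id S := by
  induction h with
  | refl => exact ⟨0, fun _ => S, ⟨rfl, by simp⟩, rfl, by simp⟩
  | tail _ hsplit ih =>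
    obtain ⟨m, g, hg, rfl, hm⟩ := ih
    obtain ⟨i, hsplit⟩ := hsplit
    obtain ⟨g', hg', hend⟩ := hg.exists_snoc (Or.inl ⟨i, hsplit⟩)
    refine ⟨m + 1, g', hg', hend, ?_⟩
    have hdrop := hsplit.weight_id_add_one
    push_cast
    omega

end Games

section CombinePhase

variable {S : BState}

-- At the rightmost adjacent pair `i, i + 1` the index `i + 2` is free, so no pile is created.
lemma exists_combineAt_of_not_terminal (hS : ∀ i, S i ≤ 1) (hT : ¬ Terminal S) :
    ∃ S' i, CombineAt S S' i ∧ ∀ j, S' j ≤ 1 := by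
  have hpairs : (S.support.filter fun i => 1 ≤ S (i + 1)).Nonempty := by
    simp only [Terminal, not_and, not_forall, not_not] at hT
    obtain ⟨i, hi, hi'⟩ := hT hS
    exact ⟨i, mem_filter.mpr ⟨Finsupp.mem_support_iff.mpr (by omega), hi'⟩⟩
  obtain ⟨i, hmem, hmax⟩ := exists_max_image _ id hpairs
  simp only [mem_filter, Finsupp.mem_support_iff, id] at hmem hmax
  have hfree : S (i + 2) = 0 := by
    by_contra hne
    have := hmax (i + 1) ⟨by omega, by rw [add_assoc, one_add_one_eq_two]; omega⟩
    omega
  refine ⟨_, i, ⟨by omega, hmem.2, rfl⟩, fun j => ?_⟩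
  simp only [Finsupp.add_apply, Finsupp.tsub_apply, Finsupp.single_apply]
  have hj := hS j
  obtain rfl | hne := eq_or_ne (i + 2) j
  · simp [hfree]
  · simp only [hne, if_false]
    omega

lemma exists_reachable_terminal (hS : ∀ i, S i ≤ 1) : ∃ T, Reachable S T ∧ Terminal T := by
  induction hd : S.degree generalizing S with
  | zero =>
    obtain rfl := Finsupp.degree_eq_zero_iff S |>.mp hd
    exact ⟨0, .refl, by simp [Terminal]⟩
  | succ d ih =>
    by_cases hT : Terminal S
    · exact ⟨S, .refl, hT⟩
    obtain ⟨S', i, hcombine, hS'⟩ := exists_combineAt_of_not_terminal hS hT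
    obtain ⟨T, hreach, hT⟩ := ih hS' (by have := hcombine.degree_add_one; omega)
    exact ⟨T, .head (Or.inr ⟨i, hcombine⟩) hreach, hT⟩

end CombinePhase

section SplitPhase

variable {S S' : BState} {c i : ℤ}

/-- Below `c`, the state `S` has no gap of three empty indices to the right of a chip. Splitting
preserves this property, which bounds how far to the left the chips can travel. -/
def NoGapBelow (c : ℤ) (S : BState) : Prop :=
  ∀ j ≤ c, (∃ i ≤ j, S i ≠ 0) → ∃ i ∈ Set.Icc j (j + 2), S i ≠ 0

lemma exists_noGapBelow (S : BState) : ∃ c, NoGapBelow c S := by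
  obtain ⟨c, hc⟩ := S.support.bddBelow
  refine ⟨c, fun j hj => fun ⟨i, hij, hi⟩ => ⟨i, ⟨?_, by omega⟩, hi⟩⟩
  exact hj.trans (hc (Finsupp.mem_support_iff.mpr hi))

lemma NoGapBelow.of_splitAt (hS : NoGapBelow c S) (h : SplitAt S S' i) : NoGapBelow c S' := by
  obtain ⟨htwo, rfl⟩ := h
  intro j hj ⟨a, haj, ha⟩
  simp only [Finsupp.add_apply, Finsupp.tsub_apply, Finsupp.single_apply] at ha ⊢
  by_cases hwindow : j ≤ i ∧ i ≤ j + 2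
  · obtain hright | hleft : i = j + 2 ∨ i + 1 ≤ j + 2 := by omega
    · exact ⟨i - 2, ⟨by omega, by omega⟩, by simp⟩
    · exact ⟨i + 1, ⟨by omega, hleft⟩, by simp⟩
  · have hchip : ∃ b ≤ j, S b ≠ 0 := by
      by_cases hij : i ≤ j
      · exact ⟨i, hij, by omega⟩
      · refine ⟨a, haj, ?_⟩
        simpa [show i ≠ a by omega, show i + 1 ≠ a by omega, show i - 2 ≠ a by omega] using ha
    obtain ⟨b, hb, hb0⟩ := hS j hj hchip
    have hib : i ≠ b := by rintro rfl; exact hwindow hb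
    exact ⟨b, hb, by simp [hib, hb0]⟩

lemma card_support_le_degree {σ : Type*} (S : σ →₀ ℕ) : #S.support ≤ S.degree := by
  rw [card_eq_sum_ones, Finsupp.degree_apply]
  exact sum_le_sum fun i hi => Nat.one_le_iff_ne_zero.mpr (Finsupp.mem_support_iff.mp hi)

lemma NoGapBelow.lt_add_three_mul_degree (hS : NoGapBelow c S) (hi : S i ≠ 0) :
    c < i + 3 * S.degree := by
  by_contra! hle
  have hwindow (t : ℕ) (ht : t ∈ range (S.degree + 1)) :
      ∃ a ∈ S.support, (a - i) / 3 = t := by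
    rw [mem_range] at ht
    obtain ⟨a, ha, ha0⟩ := hS (i + 3 * t) (by omega) ⟨i, by omega, hi⟩
    rw [Set.mem_Icc] at ha
    exact ⟨a, Finsupp.mem_support_iff.mpr ha0, by omega⟩
  choose! a ha hquot using hwindow
  have hinj : Set.InjOn a (range (S.degree + 1)) := fun t ht u hu htu => by
    have := (hquot t ht).symm.trans (htu ▸ hquot u hu)
    omega
  have hcard := card_le_card_of_injOn a ha hinj
  rw [card_range] at hcard
  have := card_support_le_degree S
  omega

lemma NoGapBelow.le_weight_id (hS : NoGapBelow c S) :
    S.degree * (c - 3 * S.degree) ≤ Finsupp.weight (id : ℤ → ℤ) S := by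
  rw [Finsupp.weight_apply, Finsupp.sum]
  nth_rw 1 [Finsupp.degree_apply]
  push_cast
  rw [sum_mul]
  refine sum_le_sum fun i hi => ?_
  have := hS.lt_add_three_mul_degree (Finsupp.mem_support_iff.mp hi)
  exact mul_le_mul_of_nonneg_left (by simp only [id]; omega) (by positivity)

lemma exists_splitReachable_le_one (S : BState) : ∃ T, SplitReachable S T ∧ ∀ i, T i ≤ 1 := by
  obtain ⟨c, hS⟩ := exists_noGapBelow S
  induction hd : (Finsupp.weight (id : ℤ → ℤ) S - S.degree * (c - 3 * S.degree)).toNat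
    generalizing S with
  | zero =>
    refine ⟨S, .refl, fun i => ?_⟩
    by_contra! htwo
    have hsplit : SplitAt S _ i := ⟨htwo, rfl⟩
    have hle := (hS.of_splitAt hsplit).le_weight_id
    have hdrop := hsplit.weight_id_add_one
    rw [hsplit.degree_eq] at hle
    omega
  | succ d ih =>
    by_cases hone : ∀ i, S i ≤ 1
    · exact ⟨S, .refl, hone⟩
    push Not at hone
    obtain ⟨i, htwo⟩ := hone
    have hsplit : SplitAt S _ i := ⟨htwo, rfl⟩
    have hdrop := hsplit.weight_id_add_one
    obtain ⟨T, hreach, hT⟩ := ih _ (hS.of_splitAt hsplit) (by rw [hsplit.degree_eq]; omega)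
    exact ⟨T, .head ⟨i, hsplit⟩ hreach, hT⟩

lemma weight_eq_sum_support_of_le_one {σ M : Type*} [AddCommMonoid M] {S : σ →₀ ℕ}
    (hS : ∀ i, S i ≤ 1) (f : σ → M) : Finsupp.weight f S = ∑ i ∈ S.support, f i := by
  rw [Finsupp.weight_apply, Finsupp.sum]
  refine sum_congr rfl fun i hi => ?_
  have hone : S i = 1 := by
    have := hS i
    have := Finsupp.mem_support_iff.mp hi
    omega
  rw [hone, one_smul]

end SplitPhase

section IntegerSets

variable {G : Finset ℤ} {a c l : ℤ}

lemma add_two_mul_card_le_of_odd_sub (hac : a ≤ c)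
    (hG : ∀ i ∈ G, a < i ∧ i < c ∧ Odd (i - a)) : a + 2 * #G ≤ c := by
  induction G using induction_on_min generalizing a with
  | empty => simpa using hac
  | insert b G hb ih =>
    have hab := hG b (mem_insert_self ..)
    have hrest := ih (a := b + 1) (by omega) fun i hi => by
      have := hb i hi
      have := hG i (mem_insert_of_mem hi)
      simp only [Int.odd_iff] at *
      omega
    rw [card_insert_of_notMem fun h => lt_irrefl _ (hb b h)]
    push_cast
    omega

-- The `c - i` are distinct positive integers of one parity, so they sum to at least
-- `1 + 3 + ⋯ + (2 * #G - 1)`.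
lemma card_sq_le_sum_sub_of_odd_sub (hG : ∀ i ∈ G, a < i ∧ i < c ∧ Odd (i - a)) :
    (#G : ℤ) ^ 2 ≤ ∑ i ∈ G, (c - i) := by
  induction G using induction_on_min generalizing a with
  | empty => simp
  | insert b G hb ih =>
    have hab := hG b (mem_insert_self ..)
    have hshift : ∀ i ∈ G, b + 1 < i ∧ i < c ∧ Odd (i - (b + 1)) := fun i hi => by
      have := hb i hi
      have := hG i (mem_insert_of_mem hi)
      simp only [Int.odd_iff] at *
      omega
    have hcard := add_two_mul_card_le_of_odd_sub (by omega) hshift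
    have hrest := ih hshift
    have hbG : b ∉ G := fun h => lt_irrefl _ (hb b h)
    rw [sum_insert hbG, card_insert_of_notMem hbG]
    push_cast
    linarith

lemma sum_Icc_neg_self (l : ℤ) : ∑ i ∈ Icc (-l) l, i = 0 :=
  sum_involution (fun i _ => -i) (by simp) (by intros; omega)
    (by simp only [mem_Icc]; intros; omega) (by simp)

lemma card_le_of_subset_Icc_neg_self (hl : 0 ≤ l) (hG : G ⊆ Icc (-l) l) :
    (#G : ℤ) ≤ 2 * l + 1 := by
  have := card_le_card hG
  rw [Int.card_Icc] at this
  omega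

lemma sum_add_le_of_subset_Icc_neg_self (hl : 0 ≤ l) (hG : G ⊆ Icc (-l) l) :
    ∑ i ∈ G, (l + i) ≤ l * (2 * l + 1) :=
  calc ∑ i ∈ G, (l + i)
    _ ≤ ∑ i ∈ Icc (-l) l, (l + i) :=
        sum_le_sum_of_subset_of_nonneg hG fun i hi _ => by rw [mem_Icc] at hi; omega
    _ = l * (2 * l + 1) := by
        rw [sum_add_distrib, sum_Icc_neg_self, sum_const, Int.card_Icc, nsmul_eq_mul,
          Int.toNat_of_nonneg (by omega)]
        ring

lemma card_sq_sub_one_le_sum_sub (ha : a ∈ G) (hc : ∀ i ∈ G, i < c)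
    (hG : ∀ i ∈ G, i ≠ a → a < i ∧ Odd (i - a)) : (#G : ℤ) ^ 2 - 1 ≤ ∑ i ∈ G, (c - i) := by
  have herase : ∀ i ∈ G.erase a, a < i ∧ i < c ∧ Odd (i - a) := fun i hi => by
    obtain ⟨hia, hi⟩ := mem_erase.mp hi
    exact ⟨(hG i hi hia).1, hc i hi, (hG i hi hia).2⟩
  have hcard := add_two_mul_card_le_of_odd_sub (hc a ha).le herase
  have hsum := card_sq_le_sum_sub_of_odd_sub herase
  rw [← add_sum_erase G _ ha, ← card_erase_add_one ha]
  push_cast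
  linarith

lemma sq_add_mul_sub_one_le_neg_sum (hl : 0 ≤ l) (hcard : 2 * l + 1 < #G)
    (hle : ∀ i ∈ G, i ≤ l) (ha : a ∈ G) (hmin : ∀ i ∈ G, a ≤ i)
    (hodd : ∀ i ∈ G, i ≠ a → i < -l → Odd (i - a)) :
    (#G - 2 * l - 1) ^ 2 + l * (#G - 2 * l - 1) - 1 ≤ -∑ i ∈ G, i := by
  have hinner : G.filter (¬ · < -l) ⊆ Icc (-l) l := fun i hi => by
    obtain ⟨hi, hil⟩ := mem_filter.mp hi
    exact mem_Icc.mpr ⟨not_lt.mp hil, hle i hi⟩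
  have hinner_card := card_le_of_subset_Icc_neg_self hl hinner
  have hinner_sum := sum_add_le_of_subset_Icc_neg_self hl hinner
  have hsplit_card := card_filter_add_card_filter_not (s := G) (· < -l)
  have haouter : a ∈ G.filter (· < -l) := by
    obtain ⟨b, hb⟩ : (G.filter (· < -l)).Nonempty := by rw [← card_pos]; omega
    obtain ⟨hb, hbl⟩ := mem_filter.mp hb
    exact mem_filter.mpr ⟨ha, (hmin b hb).trans_lt hbl⟩
  have houter_sum := card_sq_sub_one_le_sum_sub haouter (c := -l) (by simp) fun i hi hia => by
    obtain ⟨hi, hil⟩ := mem_filter.mp hi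
    exact ⟨lt_of_le_of_ne (hmin i hi) hia.symm, hodd i hi hia hil⟩
  have houter_card : (#G : ℤ) - 2 * l - 1 ≤ #(G.filter (· < -l)) := by omega
  have hsq := pow_le_pow_left₀ (by omega) houter_card 2
  have hneg : ∑ i ∈ G.filter (· < -l), (-l - i) = -∑ i ∈ G.filter (· < -l), (l + i) := by
    rw [← sum_neg_distrib]
    exact sum_congr rfl fun i _ => by ring
  have hsplit_sum := sum_filter_add_sum_filter_not G (· < -l) (l + ·)
  rw [sum_add_distrib (s := G), sum_const, nsmul_eq_mul] at hsplit_sum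
  linarith

end IntegerSets

section GoldenRatio

variable {G : Finset ℤ} {a i : ℤ}

lemma zpow_add_one_add_zpow_sub_two {K : Type*} [Field K] {x : K} (hx : x ^ 2 = x + 1) (i : ℤ) :
    x ^ (i + 1) + x ^ (i - 2) = 2 • x ^ i := by
  have hx0 : x ≠ 0 := by rintro rfl; simp at hx
  rw [zpow_add_one₀ hx0, zpow_sub₀ hx0, nsmul_eq_mul]
  field_simp
  push_cast
  linear_combination (x - 1) * hx

lemma sum_goldenRatio_zpow_neg_le_of_odd_sub (hG : ∀ i ∈ G, a < i ∧ Odd (i - a)) :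
    ∑ i ∈ G, φ ^ (-i) ≤ φ ^ (-a) := by
  induction G using induction_on_min generalizing a with
  | empty => simpa using (zpow_pos Real.goldenRatio_pos _).le
  | insert b G hb ih =>
    have hab := hG b (mem_insert_self ..)
    have hrest := ih (a := b + 1) fun i hi => by
      have := hb i hi
      have := hG i (mem_insert_of_mem hi)
      simp only [Int.odd_iff] at *
      omega
    rw [sum_insert fun h => lt_irrefl _ (hb b h)]
    calc φ ^ (-b) + ∑ i ∈ G, φ ^ (-i)
      _ ≤ φ ^ (-b) + φ ^ (-(b + 1)) := by gcongr
      _ = φ ^ (-b + 1) := by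
          rw [neg_add, ← sub_eq_add_neg, zpow_sub_one₀ Real.goldenRatio_ne_zero,
            zpow_add_one₀ Real.goldenRatio_ne_zero, Real.inv_goldenRatio,
            ← Real.one_sub_goldenConj]
          ring
      _ ≤ φ ^ (-a) := zpow_le_zpow_right₀ Real.one_lt_goldenRatio.le (by omega)

lemma neg_one_zpow_mul_goldenConj_zpow (a i : ℤ) :
    (-1) ^ a * ψ ^ i = if Even (i - a) then φ ^ (-i) else -φ ^ (-i) := by
  have hψ : ψ = -φ⁻¹ := by rw [Real.inv_goldenRatio, neg_neg]
  rw [hψ, neg_eq_neg_one_mul φ⁻¹, mul_zpow, inv_zpow', neg_one_zpow_eq_ite, neg_one_zpow_eq_ite]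
  by_cases ha : Even a <;> by_cases hi : Even i <;> simp [Int.even_sub, ha, hi]

lemma goldenRatio_zpow_neg_le_abs_sum (ha : a ∈ G) (hmin : ∀ j ∈ G, a ≤ j) (hi : i ∈ G)
    (hia : i ≠ a) (heven : Even (i - a)) : φ ^ (-i) ≤ |∑ j ∈ G, ψ ^ j| := by
  have hsame : φ ^ (-i) + φ ^ (-a) ≤ ∑ j ∈ G with Even (j - a), φ ^ (-j) := by
    rw [← sum_pair hia (f := fun j => φ ^ (-j))]
    refine sum_le_sum_of_subset_of_nonneg ?_ fun j _ _ => (zpow_pos Real.goldenRatio_pos _).le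
    simp [insert_subset_iff, ha, hi, heven]
  have hopposite : ∑ j ∈ G with ¬ Even (j - a), φ ^ (-j) ≤ φ ^ (-a) := by
    refine sum_goldenRatio_zpow_neg_le_of_odd_sub fun j hj => ?_
    obtain ⟨hj, hodd⟩ := mem_filter.mp hj
    refine ⟨lt_of_le_of_ne (hmin j hj) ?_, Int.not_even_iff_odd.mp hodd⟩
    rintro rfl
    simp at hodd
  calc φ ^ (-i)
    _ ≤ ∑ j ∈ G with Even (j - a), φ ^ (-j) - ∑ j ∈ G with ¬ Even (j - a), φ ^ (-j) := by
        linarith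
    _ = (-1) ^ a * ∑ j ∈ G, ψ ^ j := by
        simp only [mul_sum, neg_one_zpow_mul_goldenConj_zpow]
        rw [sum_ite, sum_neg_distrib, sub_eq_add_neg]
    _ ≤ |(-1) ^ a * ∑ j ∈ G, ψ ^ j| := le_abs_self _
    _ = |∑ j ∈ G, ψ ^ j| := by rw [abs_mul, abs_neg_one_zpow, one_mul]

lemma logphi_eq_logb_goldenRatio : logphi = Real.logb φ := rfl

lemma lt_goldenRatio_zpow_floor_logb_add_one {x : ℝ} (hx : 0 < x) :
    x < φ ^ (⌊Real.logb φ x⌋ + 1) := by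
  rw [← Real.rpow_intCast, ← Real.logb_lt_iff_lt_rpow Real.one_lt_goldenRatio hx]
  push_cast
  exact Int.lt_floor_add_one _

lemma natCast_le_goldenRatio_pow (n : ℕ) : (n : ℝ) ≤ φ ^ n := by
  induction n using Nat.twoStepInduction with
  | zero => simp
  | one => simpa using Real.one_lt_goldenRatio.le
  | more n _ ih =>
    have hrec := Real.goldenRatio_pow_sub_goldenRatio_pow n
    have hone : 1 ≤ φ ^ n := one_le_pow₀ Real.one_lt_goldenRatio.le
    push_cast at ih ⊢
    linarith

lemma logb_goldenRatio_natCast_le {n : ℕ} (hn : 0 < n) : Real.logb φ n ≤ n := by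
  rw [Real.logb_le_iff_le_rpow Real.one_lt_goldenRatio (by positivity), Real.rpow_natCast]
  exact natCast_le_goldenRatio_pow n

lemma sq_add_mul_sub_one_le_neg_sum_of_sum_zpow_eq {l : ℤ} (hl : 0 ≤ l) (hcard : 2 * l + 1 < #G)
    (hlog : #G < φ ^ (l + 1)) (hφ : ∑ i ∈ G, φ ^ i = #G) (hψ : ∑ i ∈ G, ψ ^ i = #G) :
    (#G - 2 * l - 1) ^ 2 + l * (#G - 2 * l - 1) - 1 ≤ -∑ i ∈ G, i := by
  have hle_of_zpow_le {i : ℤ} (hi : φ ^ i ≤ #G) : i ≤ l :=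
    Int.lt_add_one_iff.mp <|
      (zpow_lt_zpow_iff_right₀ Real.one_lt_goldenRatio).mp (hi.trans_lt hlog)
  obtain ⟨a, ha, hmin⟩ := exists_min_image G id (card_pos.mp (by omega))
  refine sq_add_mul_sub_one_le_neg_sum hl hcard (fun i hi => hle_of_zpow_le ?_) ha hmin
    fun i hi hia hil => ?_
  · rw [← hφ]
    exact single_le_sum (f := (φ ^ ·)) (fun j _ => (zpow_pos Real.goldenRatio_pos j).le) hi
  · by_contra hodd
    have hzpow := goldenRatio_zpow_neg_le_abs_sum ha hmin hi hia (Int.not_odd_iff_even.mp hodd)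
    rw [hψ, Nat.abs_cast] at hzpow
    have := hle_of_zpow_le hzpow
    omega

end GoldenRatio

section LengthBound

variable {n L : ℝ}

/-- The lower bound for the length of a game from `₀(n)`, with `L` standing for `log_φ n`. -/
def lengthBound (n L : ℝ) : ℝ :=
  n ^ 2 - 6 * n - 3 * n * L + 5 * L + 2 * L ^ 2 - 1

lemma lengthBound_nonpos (hn : 0 ≤ n) (hLn : L ≤ n) (hnL : n ≤ 2 * L + 5) :
    lengthBound n L ≤ 0 := by
  have hprod : 0 ≤ (n - L) * (2 * L + 5 - n) :=
    mul_nonneg (sub_nonneg.mpr hLn) (sub_nonneg.mpr hnL)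
  rw [lengthBound]
  linarith

lemma lengthBound_le {l : ℝ} (hl : 0 ≤ l) (hlL : l ≤ L) (hnL : 2 * L + 5 ≤ n) :
    lengthBound n L ≤ (n - 2 * l - 1) ^ 2 + l * (n - 2 * l - 1) - 1 := by
  have hprod : 0 ≤ (L - l) * (3 * n - 2 * (L + l) - 3) :=
    mul_nonneg (sub_nonneg.mpr hlL) (by linarith)
  rw [lengthBound]
  linarith

end LengthBound

lemma exists_splitReachable_completeGame (S : BState) :
    ∃ (T : BState) (m : ℕ) (g : ℕ → BState), SplitReachable S T ∧ (∀ i, T i ≤ 1) ∧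
      CompleteGame S m g ∧ Finsupp.weight (id : ℤ → ℤ) S - Finsupp.weight id T ≤ m := by
  obtain ⟨T, hST, hT⟩ := exists_splitReachable_le_one S
  obtain ⟨m, g, hg, rfl, hm⟩ := hST.exists_game
  obtain ⟨U, hTU, hU⟩ := exists_reachable_terminal hT
  obtain ⟨k, g', hg', rfl⟩ := hg.exists_append hTU
  exact ⟨g m, m + k, g', hST, hT, ⟨hg', hU⟩, by push_cast; omega⟩

lemma exists_completeGame_initState_of_lt_zpow {n : ℕ} {l : ℤ} (hl : 0 ≤ l) (hln : 2 * l + 1 < n)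
    (hlog : n < φ ^ (l + 1)) :
    ∃ (m : ℕ) (g : ℕ → BState), CompleteGame (initState n) m g ∧
      (n - 2 * l - 1) ^ 2 + l * (n - 2 * l - 1) - 1 ≤ (m : ℤ) := by
  obtain ⟨T, m, g, hreach, hT, hg, hm⟩ := exists_splitReachable_completeGame (initState n)
  have hcard : #T.support = n := by
    have h := hreach.degree_eq
    rwa [Finsupp.degree_eq_weight_one, weight_eq_sum_support_of_le_one hT, ← card_eq_sum_ones,
      ← Finsupp.degree_eq_weight_one, initState, Finsupp.degree_single] at h
  have hzpow {x : ℝ} (hx : x ^ 2 = x + 1) : ∑ i ∈ T.support, x ^ i = #T.support := by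
    rw [← weight_eq_sum_support_of_le_one hT,
      hreach.weight_eq (zpow_add_one_add_zpow_sub_two hx), hcard, initState, Finsupp.weight_single]
    simp
  rw [weight_eq_sum_support_of_le_one hT, initState, Finsupp.weight_single] at hm
  simp only [id, smul_zero, zero_sub] at hm
  subst hcard
  exact ⟨m, g, hg, (sq_add_mul_sub_one_le_neg_sum_of_sum_zpow_eq hl hln hlog
    (hzpow Real.goldenRatio_sq) (hzpow Real.goldenConj_sq)).trans hm⟩

theorem bergman_long_game_exists_general (n : ℕ) (hn : 0 < n) :
    ∃ (m : ℕ) (g : ℕ → BState), CompleteGame (initState n) m g ∧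
      (n : ℝ) ^ 2 - 6 * n - 3 * n * logphi n + 5 * logphi n + 2 * (logphi n) ^ 2 - 1
        ≤ (m : ℝ) := by
  rw [logphi_eq_logb_goldenRatio]
  set L := Real.logb φ n
  obtain hnL | hnL := le_total (n : ℝ) (2 * L + 5)
  · obtain ⟨-, m, g, -, -, hg, -⟩ := exists_splitReachable_completeGame (initState n)
    have hLn : L ≤ n := logb_goldenRatio_natCast_le hn
    exact ⟨m, g, hg, (lengthBound_nonpos n.cast_nonneg hLn hnL).trans m.cast_nonneg⟩
  · have hL : 0 ≤ L := Real.logb_nonneg Real.one_lt_goldenRatio (by exact_mod_cast hn)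
    have hfloor_nonneg : 0 ≤ ⌊L⌋ := Int.floor_nonneg.mpr hL
    have hfloor_le : (⌊L⌋ : ℝ) ≤ L := Int.floor_le L
    have hfloor_lt : 2 * ⌊L⌋ + 1 < (n : ℤ) := by
      rify
      linarith
    obtain ⟨m, g, hg, hm⟩ := exists_completeGame_initState_of_lt_zpow hfloor_nonneg hfloor_lt
      (lt_goldenRatio_zpow_floor_logb_add_one (by positivity))
    refine ⟨m, g, hg, (lengthBound_le ?_ hfloor_le hnL).trans ?_⟩ <;> assumption_mod_cast

/-- For `n ≥ 20` there is a complete Bergman game from `₀(n)` of length at least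
`n² − 6n − 3n·log_φ n + 5·log_φ n + 2(log_φ n)² − 1`. -/
theorem bergman_long_game_exists (n : ℕ) (hn : 20 ≤ n) :
    ∃ (m : ℕ) (g : ℕ → BState), CompleteGame (initState n) m g ∧
      (n : ℝ) ^ 2 - 6 * n - 3 * n * logphi n + 5 * logphi n + 2 * (logphi n) ^ 2 - 1
        ≤ (m : ℝ) :=
  bergman_long_game_exists_general n (by omega)
end
end

section
/- Let n ≥ 1 and let T be a nonzero state reachable from ₀(n) by Bergman moves in which every entry is 0 or 1. Let i₀ be the least index with T i₀ = 1, and suppose (i₀ : ℝ) < −log_φ n − 5. Then T(i₀ + 1) = 1 and T(i₀ + 2) = 0; that is, the left edge of T has the form 110…. -/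
noncomputable section

/-!
A state `S` has a value `∑ S i * x ^ i` at every root `x` of `x² = x + 1`, and both moves preserve
it. We use the conjugate root `ψ = -φ⁻¹`, at which the *left* end of a state dominates. Reading a
0-1 state from its least index `m` by Horner's rule, its value at `ψ` is `ψ ^ m * u` with
`u ∈ [-1, φ]`, and `u ≥ ψ²` unless the left edge is `110…`. Hence any other left edge forces the
value at `ψ` to be at least `φ ^ (-m - 2)` in absolute value, while the value of `₀(n)` is only `n`.
-/

open Real
open scoped goldenRatio

section StateValue

variable {K : Type*} [Field K] {x : K}

/-- The value `∑ S i * x ^ i` of a state at `x`, as an additive function of the state. The value at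
`φ` is the real number the state represents; the value at `ψ` is the algebraic conjugate of it. -/
def stateValue (x : K) : BState →ₗ[ℕ] K := Finsupp.linearCombination ℕ fun i : ℤ => x ^ i

lemma stateValue_single (x : K) (i : ℤ) (c : ℕ) :
    stateValue x (Finsupp.single i c) = c * x ^ i := by
  rw [stateValue, Finsupp.linearCombination_single, nsmul_eq_mul]

lemma stateValue_initState (x : K) (n : ℕ) : stateValue x (initState n) = n := by
  rw [initState, stateValue_single, zpow_zero, mul_one]

lemma stateValue_tsub_add {S D A : BState} (hD : D ≤ S)
    (hDA : stateValue x A = stateValue x D) :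
    stateValue x (S - D + A) = stateValue x S := by
  rw [map_add, hDA, ← map_add, tsub_add_cancel_of_le hD]

lemma ne_zero_of_sq_eq_add_one (hx : x ^ 2 = x + 1) : x ≠ 0 := by
  rintro rfl
  simp at hx

lemma zpow_add_two_eq (hx : x ^ 2 = x + 1) (i : ℤ) : x ^ (i + 2) = x ^ i + x ^ (i + 1) := by
  have hx₀ := ne_zero_of_sq_eq_add_one hx
  rw [zpow_add₀ hx₀, zpow_add_one₀ hx₀, zpow_ofNat, hx]
  ring

lemma two_mul_zpow_eq (hx : x ^ 2 = x + 1) (i : ℤ) :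
    2 * x ^ i = x ^ (i + 1) + x ^ (i - 2) := by
  have h₁ := zpow_add_two_eq hx (i - 1)
  have h₂ := zpow_add_two_eq hx (i - 2)
  ring_nf at h₁ h₂ ⊢
  linear_combination h₂ - h₁

lemma SplitAt.stateValue_eq (hx : x ^ 2 = x + 1) {S S' : BState} {i : ℤ} (h : SplitAt S S' i) :
    stateValue x S' = stateValue x S := by
  obtain ⟨hi, rfl⟩ := h
  rw [add_assoc]
  refine stateValue_tsub_add (Finsupp.single_le_iff.mpr hi) ?_
  simp only [map_add, stateValue_single, Nat.cast_one, Nat.cast_ofNat, one_mul,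
    two_mul_zpow_eq hx]

lemma CombineAt.stateValue_eq (hx : x ^ 2 = x + 1) {S S' : BState} {i : ℤ}
    (h : CombineAt S S' i) : stateValue x S' = stateValue x S := by
  obtain ⟨hi, hi', rfl⟩ := h
  have hle : Finsupp.single i 1 + Finsupp.single (i + 1) 1 ≤ S := by
    intro j
    simp only [Finsupp.add_apply, Finsupp.single_apply]
    grind
  rw [tsub_tsub]
  refine stateValue_tsub_add hle ?_
  simp only [map_add, stateValue_single, Nat.cast_one, one_mul, zpow_add_two_eq hx]

lemma Move.stateValue_eq (hx : x ^ 2 = x + 1) {S S' : BState} (h : Move S S') :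
    stateValue x S' = stateValue x S := by
  rcases h with ⟨_, hsplit⟩ | ⟨_, hcombine⟩
  · exact hsplit.stateValue_eq hx
  · exact hcombine.stateValue_eq hx

lemma Reachable.stateValue_eq (hx : x ^ 2 = x + 1) {S T : BState} (h : Reachable S T) :
    stateValue x T = stateValue x S := by
  induction h with
  | refl => rfl
  | tail _ hmove ih => rw [hmove.stateValue_eq hx, ih]

/-- The value at `x` of a state shifted so that index `m` becomes index `0`. -/
def shiftedValue (x : K) (m : ℤ) (S : BState) : K := x ^ (-m) * stateValue x S

lemma shiftedValue_eq_add_mul_erase (hx : x ≠ 0) (m : ℤ) (S : BState) :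
    shiftedValue x m S = S m + x * shiftedValue x (m + 1) (S.erase m) := by
  have hS : stateValue x S = S m * x ^ m + stateValue x (S.erase m) := by
    rw [← stateValue_single, ← map_add, Finsupp.single_add_erase]
  have hm : x ^ (-m) * x ^ m = 1 := by rw [← zpow_add₀ hx, neg_add_cancel, zpow_zero]
  have hm' : x * x ^ (-(m + 1)) = x ^ (-m) := by
    rw [← zpow_one_add₀ hx]
    congr 1
    ring
  rw [shiftedValue, shiftedValue, hS, ← mul_assoc, hm']
  linear_combination (S m : K) * hm

end StateValue

/-- A 0-1 state all of whose chips are at indices `≥ m`; index `m` itself may be empty. -/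
structure IsBinaryFrom (m : ℤ) (S : BState) : Prop where
  apply_le_one : ∀ i, S i ≤ 1
  apply_eq_zero : ∀ j < m, S j = 0

namespace IsBinaryFrom

variable {m : ℤ} {S : BState}

lemma erase (h : IsBinaryFrom m S) : IsBinaryFrom (m + 1) (S.erase m) where
  apply_le_one i := by
    rw [Finsupp.erase_apply]
    split_ifs
    exacts [zero_le_one, h.apply_le_one i]
  apply_eq_zero j hj := by
    rw [Finsupp.erase_apply]
    split_ifs with hjm
    exacts [rfl, h.apply_eq_zero j (by lia)]

lemma erase_induction {P : ℤ → BState → Prop} (zero : ∀ m, P m 0)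
    (step : ∀ m S, IsBinaryFrom m S → P (m + 1) (S.erase m) → P m S)
    (h : IsBinaryFrom m S) : P m S := by
  obtain ⟨M, hM⟩ := S.support.bddAbove
  have hbound : ∀ j, m + (M + 1 - m).toNat ≤ j → S j = 0 := by
    intro j hj
    by_contra hne
    have hjM : j ≤ M := hM (Finsupp.mem_support_iff.mpr hne)
    lia
  generalize (M + 1 - m).toNat = N at hbound
  clear hM
  induction N generalizing m S with
  | zero =>
    obtain rfl : S = 0 := Finsupp.ext fun j => by
      rcases lt_or_ge j m with hj | hj
      exacts [h.apply_eq_zero j hj, hbound j (by simpa using hj)]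
    exact zero m
  | succ N ih =>
    refine step m S h (ih h.erase fun j hj => ?_)
    rw [Finsupp.erase_ne (by lia), hbound j (by push_cast; lia)]

lemma shiftedValue_goldenConj_mem_Icc (h : IsBinaryFrom m S) :
    shiftedValue ψ m S ∈ Set.Icc (-1) φ := by
  refine erase_induction (P := fun m S => shiftedValue ψ m S ∈ Set.Icc (-1) φ) ?_ ?_ h
  · intro m
    simp [shiftedValue, goldenRatio_pos.le]
  · rintro m S h ⟨hlower, hupper⟩
    have hSm : (S m : ℝ) ≤ 1 := mod_cast h.apply_le_one m
    -- Multiplication by `ψ` maps `[-1, φ]` onto `[-1, φ - 1]`.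
    have hlower' := mul_le_mul_of_nonpos_left hupper goldenConj_neg.le
    have hupper' := mul_le_mul_of_nonpos_left hlower goldenConj_neg.le
    have hψφ := goldenConj_mul_goldenRatio
    have hsum := goldenRatio_add_goldenConj
    rw [shiftedValue_eq_add_mul_erase goldenConj_ne_zero]
    constructor <;> linarith [(S m).cast_nonneg (α := ℝ)]

lemma shiftedValue_goldenConj_nonneg (h : IsBinaryFrom m S) (hm : S m = 1) :
    0 ≤ shiftedValue ψ m S := by
  have hupper := h.erase.shiftedValue_goldenConj_mem_Icc.2
  have hlower := mul_le_mul_of_nonpos_left hupper goldenConj_neg.le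
  rw [goldenConj_mul_goldenRatio] at hlower
  rw [shiftedValue_eq_add_mul_erase goldenConj_ne_zero, hm, Nat.cast_one]
  linarith

lemma sq_goldenConj_le_shiftedValue (h : IsBinaryFrom m S) (hm : S m = 1)
    (hedge : ¬(S (m + 1) = 1 ∧ S (m + 2) = 0)) :
    ψ ^ 2 ≤ shiftedValue ψ m S := by
  set R := (S.erase m).erase (m + 1) with hR
  have hRbin : IsBinaryFrom (m + 1 + 1) R := h.erase.erase
  have hSm₁ : S.erase m (m + 1) = S (m + 1) := Finsupp.erase_ne (by lia)
  have hRm₂ : R (m + 1 + 1) = S (m + 2) := by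
    rw [hR, Finsupp.erase_ne (by lia), Finsupp.erase_ne (by lia), add_assoc, one_add_one_eq_two]
  have hpeel : shiftedValue ψ m S = 1 + ψ * (S (m + 1) + ψ * shiftedValue ψ (m + 1 + 1) R) := by
    rw [shiftedValue_eq_add_mul_erase goldenConj_ne_zero,
      shiftedValue_eq_add_mul_erase goldenConj_ne_zero, hm, hSm₁, Nat.cast_one]
  have hle₁ := h.apply_le_one (m + 1)
  have hle₂ := h.apply_le_one (m + 2)
  obtain h₀ | ⟨h₁, h₂⟩ : S (m + 1) = 0 ∨ S (m + 1) = 1 ∧ S (m + 2) = 1 := by lia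
  · calc ψ ^ 2 ≤ -ψ := by nlinarith [goldenConj_neg, neg_one_lt_goldenConj]
      _ = 1 + ψ ^ 2 * -1 := by linear_combination goldenConj_sq
      _ ≤ 1 + ψ ^ 2 * shiftedValue ψ (m + 1 + 1) R := by
        gcongr
        exact hRbin.shiftedValue_goldenConj_mem_Icc.1
      _ = shiftedValue ψ m S := by rw [hpeel, h₀, Nat.cast_zero]; ring
  · have hnonneg := hRbin.shiftedValue_goldenConj_nonneg (hRm₂.trans h₂)
    calc ψ ^ 2 = 1 + ψ := by rw [goldenConj_sq, add_comm]
      _ ≤ 1 + ψ + ψ ^ 2 * shiftedValue ψ (m + 1 + 1) R :=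
        le_add_of_nonneg_right (mul_nonneg (sq_nonneg ψ) hnonneg)
      _ = shiftedValue ψ m S := by rw [hpeel, h₁, Nat.cast_one]; ring

end IsBinaryFrom

lemma abs_goldenConj_eq_inv : |ψ| = φ⁻¹ := by
  rw [abs_of_neg goldenConj_neg, inv_goldenRatio]

lemma abs_shiftedValue_goldenConj (m : ℤ) (S : BState) :
    |shiftedValue ψ m S| = φ ^ m * |stateValue ψ S| := by
  rw [shiftedValue, abs_mul, abs_zpow, abs_goldenConj_eq_inv, inv_zpow', neg_neg]

lemma IsBinaryFrom.zpow_le_abs_stateValue {m : ℤ} {S : BState} (h : IsBinaryFrom m S)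
    (hm : S m = 1) (hedge : ¬(S (m + 1) = 1 ∧ S (m + 2) = 0)) :
    φ ^ (-m - 2) ≤ |stateValue ψ S| := by
  have hψsq : ψ ^ 2 = φ ^ (-2 : ℤ) := by
    rw [← sq_abs, abs_goldenConj_eq_inv, ← inv_zpow', zpow_ofNat]
  have hshifted : φ ^ (-2 : ℤ) ≤ φ ^ m * |stateValue ψ S| := by
    rw [← hψsq, ← abs_shiftedValue_goldenConj]
    exact (h.sq_goldenConj_le_shiftedValue hm hedge).trans (le_abs_self _)
  calc φ ^ (-m - 2) = φ ^ (-m) * φ ^ (-2 : ℤ) := by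
        rw [← zpow_add₀ goldenRatio_ne_zero, sub_eq_add_neg]
    _ ≤ φ ^ (-m) * (φ ^ m * |stateValue ψ S|) := by gcongr
    _ = |stateValue ψ S| := by
        rw [← mul_assoc, ← zpow_add₀ goldenRatio_ne_zero, neg_add_cancel, zpow_zero, one_mul]

lemma phi_eq_goldenRatio : phi = φ := rfl

lemma lt_zpow_of_lt_neg_logphi_sub {y : ℝ} (hy : 0 < y) {i k : ℤ}
    (hi : (i : ℝ) < -logphi y - k) : y < φ ^ (-i - k) := by
  rw [logphi, phi_eq_goldenRatio] at hi
  rw [← rpow_intCast, ← logb_lt_iff_lt_rpow one_lt_goldenRatio hy]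
  push_cast
  linarith

theorem bergman_left_edge_form_general {S T : BState} (hT : Reachable S T)
    (h01 : ∀ i, T i ≤ 1) {i₀ : ℤ} (hi₀ : T i₀ = 1) (hleast : ∀ j < i₀, T j = 0)
    (hS : |stateValue ψ S| < φ ^ (-i₀ - 2)) :
    T (i₀ + 1) = 1 ∧ T (i₀ + 2) = 0 := by
  by_contra hedge
  have hle := IsBinaryFrom.zpow_le_abs_stateValue ⟨h01, hleast⟩ hi₀ hedge
  rw [hT.stateValue_eq goldenConj_sq] at hle
  exact hle.not_gt hS

/-- If `T` is a nonzero 0-1 state reachable from `₀(n)` whose least occupied index `i₀`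
satisfies `i₀ < −log_φ n − 5`, then the left edge of `T` has the form `110…`. -/
theorem bergman_left_edge_form (n : ℕ) (hn : 1 ≤ n)
    (T : BState) (hT : Reachable (initState n) T) (hT0 : T ≠ 0)
    (h01 : ∀ i, T i ≤ 1)
    (i₀ : ℤ) (hi₀ : T i₀ = 1) (hleast : ∀ j < i₀, T j = 0)
    (hpos : (i₀ : ℝ) < -logphi n - 5) :
    T (i₀ + 1) = 1 ∧ T (i₀ + 2) = 0 := by
  refine bergman_left_edge_form_general hT h01 hi₀ hleast ?_
  rw [stateValue_initState, Nat.abs_cast]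
  exact lt_zpow_of_lt_neg_logphi_sub (mod_cast hn) (by push_cast; linarith)
end
end
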